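/- For every model triple point and all sufficiently small ε > 0, I_X^{X′₁, +,+,+} + I_X^{(X′₂,l), +,+,+} = 1 and I_X^{X′₁, +,−,−} + I_X^{(X′₂,l), +,−,−} = 0. -/

import Mathlib

open MeasureTheory Filter Topology Set

noncomputable section

abbrev E2 : Type := EuclideanSpace ℝ (Fin 2)
abbrev E3 : Type := EuclideanSpace ℝ (Fin 3)
abbrev E4 : Type := EuclideanSpace ℝ (Fin 4)
abbrev E6 : Type := EuclideanSpace ℝ (Fin 6)

/-- The point of `ℝ³` with the given coordinates. -/
def mk3 (x y z : ℝ) : E3 := (WithLp.equiv 2 (Fin 3 → ℝ)).symm ![x, y, z]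

/-- The north pole `N = (0,0,1)` of `S² ⊆ ℝ³`. -/
def NP : E3 := mk3 0 0 1

/-- Projection of `ℝ³` onto the plane `N^⊥` (the first two coordinates). -/
def pr12 (v : E3) : ℝ × ℝ := (v 0, v 1)

/-- The `N`-coordinate. -/
def pr3 (v : E3) : ℝ := v 2

/-- `unitv v = v / ‖v‖`. -/
def unitv (v : E3) : E3 := ‖v‖⁻¹ • v

/-- Determinant of the projections to `N^⊥` of two vectors (first vector, then second). -/
def cross2 (a b : E3) : ℝ := a 0 * b 1 - a 1 * b 0

/-- 3×3 determinant (scalar triple product); for `p ∈ S²` and `v, w` tangent to `S²` at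
`p`, this is the value of the standard area form of `S²` at `p` on `(v, w)`. -/
def det3 (p v w : E3) : ℝ :=
  p 0 * (v 1 * w 2 - v 2 * w 1) - p 1 * (v 0 * w 2 - v 2 * w 0) +
    p 2 * (v 0 * w 1 - v 1 * w 0)

/-! ### Long knots and 3-component long links -/

/-- A long knot: a smooth embedding `ℝ ↪ ℝ³` which is standard outside `[-1,1]`. -/
def IsLongKnot (f : ℝ → E3) : Prop :=
  ContDiff ℝ (⊤ : ℕ∞) f ∧ Function.Injective f ∧ (∀ t, deriv f t ≠ 0) ∧
    ∀ x : ℝ, 1 ≤ |x| → f x = mk3 x 0 0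

/-- Smooth isotopy of long knots. -/
def KnotIsotopic (f₀ f₁ : ℝ → E3) : Prop :=
  ∃ H : ℝ → ℝ → E3,
    ContDiff ℝ (⊤ : ℕ∞) (fun p : ℝ × ℝ => H p.1 p.2) ∧
    (∀ s, IsLongKnot (H s)) ∧ H 0 = f₀ ∧ H 1 = f₁

/-- A 3-component long link: a smooth embedding `ℝ ⊔ ℝ ⊔ ℝ ↪ ℝ³`, standard outside
`[-1,1]`, component `k` (for `k = 1,2,3`, i.e. index `i = k - 1 : Fin 3`) having ends
`x ↦ (x, (2 - k)|x|, 0)`. -/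
def IsLongLink3 (f : Fin 3 → ℝ → E3) : Prop :=
  (∀ i, ContDiff ℝ (⊤ : ℕ∞) (f i)) ∧
  (∀ i j s t, f i s = f j t → i = j ∧ s = t) ∧
  (∀ i t, deriv (f i) t ≠ 0) ∧
  ∀ i (x : ℝ), 1 ≤ |x| → f i x = mk3 x ((1 - ((i : ℕ) : ℝ)) * |x|) 0

/-- Smooth isotopy of 3-component long links. -/
def LinkIsotopic (f₀ f₁ : Fin 3 → ℝ → E3) : Prop :=
  ∃ H : ℝ → Fin 3 → ℝ → E3,
    (∀ i, ContDiff ℝ (⊤ : ℕ∞) (fun p : ℝ × ℝ => H p.1 i p.2)) ∧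
    (∀ s, IsLongLink3 (H s)) ∧ H 0 = f₀ ∧ H 1 = f₁

/-! ### Diagrams, crossings and Gauss diagram pairings -/

/-- All self-intersections of the projection of the long knot `f` are transverse
(any two branches meeting at a multiple point have independent projected tangents). -/
def TransverseK (f : ℝ → E3) : Prop :=
  ∀ t u, t ≠ u → pr12 (f t) = pr12 (f u) → cross2 (deriv f t) (deriv f u) ≠ 0

/-- The diagram of `f` has only transverse double points. -/
def OnlyDoubleK (f : ℝ → E3) : Prop :=
  TransverseK f ∧
  ∀ t u v : ℝ, t ≠ u → u ≠ v → t ≠ v →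
    pr12 (f t) = pr12 (f u) → pr12 (f u) = pr12 (f v) → False

/-- All self-intersections of the projection of the long link `f` are transverse. -/
def TransverseL (f : Fin 3 → ℝ → E3) : Prop :=
  ∀ i j s t, (i, s) ≠ (j, t) → pr12 (f i s) = pr12 (f j t) →
    cross2 (deriv (f i) s) (deriv (f j) t) ≠ 0

/-- The diagram of the long link `f` has only transverse double points. -/
def OnlyDoubleL (f : Fin 3 → ℝ → E3) : Prop :=
  TransverseL f ∧
  ∀ i j k s t u, (i, s) ≠ (j, t) → (j, t) ≠ (k, u) → (i, s) ≠ (k, u) →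
    pr12 (f i s) = pr12 (f j t) → pr12 (f j t) = pr12 (f k u) → False

/-- Crossings of a long knot diagram: pairs `(t, u)` with `t` on the lower and `u` on the
upper strand; the corresponding chord of the Gauss diagram is directed from `t` to `u`. -/
def CrossingK (f : ℝ → E3) : Set (ℝ × ℝ) :=
  {p | p.1 ≠ p.2 ∧ pr12 (f p.1) = pr12 (f p.2) ∧ pr3 (f p.1) < pr3 (f p.2)}

/-- The sign of the crossing `p = (t, u)` (`+1` iff the projected tangent of the
over-strand followed by that of the under-strand is a positive basis of `N^⊥`). -/
def csignK (f : ℝ → E3) (p : ℝ × ℝ) : ℝ :=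
  Real.sign (cross2 (deriv f p.2) (deriv f p.1))

/-- Gauss diagram pairing for a long knot: the sum, over all pairs of chords of the Gauss
diagram of `f` in the relative position prescribed by `R`, of the products of signs. -/
def pairK (f : ℝ → E3) (R : ℝ × ℝ → ℝ × ℝ → Prop) : ℝ :=
  ∑ᶠ q ∈ {q : (ℝ × ℝ) × (ℝ × ℝ) | q.1 ∈ CrossingK f ∧ q.2 ∈ CrossingK f ∧ R q.1 q.2},
    csignK f q.1 * csignK f q.2

/-- `⟨X, G_D⟩` : chords `x₁ → x₃` and `x₄ → x₂` with `x₁ < x₂ < x₃ < x₄`. -/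
def pairXK (f : ℝ → E3) : ℝ :=
  pairK f fun p q => p.1 < q.2 ∧ q.2 < p.2 ∧ p.2 < q.1

/-- `⟨X′₁, G_D⟩` : chords `a → b` and `c → a` with `a < b < c`. -/
def pairX1K (f : ℝ → E3) : ℝ :=
  pairK f fun p q => q.2 = p.1 ∧ p.1 < p.2 ∧ p.2 < q.1

/-- `⟨X′₂, G_D⟩` : chords `a → b` and `c → b` with `a < b < c`. -/
def pairX2K (f : ℝ → E3) : ℝ :=
  pairK f fun p q => q.2 = p.2 ∧ p.1 < p.2 ∧ p.2 < q.1

/-- `⟨X′₃, G_D⟩` : chords `a → c` and `c → b` with `a < b < c`. -/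
def pairX3K (f : ℝ → E3) : ℝ :=
  pairK f fun p q => p.2 = q.1 ∧ p.1 < q.2 ∧ q.2 < p.2

/-- Crossings of a 3-strand diagram between strand `i` (under) and strand `j` (over);
the corresponding chord is directed from `p.1` on strand `i` to `p.2` on strand `j`. -/
def CrossingL (f : Fin 3 → ℝ → E3) (i j : Fin 3) : Set (ℝ × ℝ) :=
  {p | pr12 (f i p.1) = pr12 (f j p.2) ∧ pr3 (f i p.1) < pr3 (f j p.2)}

/-- The sign of the crossing `p` between strand `i` (under) and strand `j` (over). -/
def csignL (f : Fin 3 → ℝ → E3) (i j : Fin 3) (p : ℝ × ℝ) : ℝ :=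
  Real.sign (cross2 (deriv (f j) p.2) (deriv (f i) p.1))

/-- Gauss diagram pairing for a 3-component long link. -/
def pairL (f : Fin 3 → ℝ → E3) (i₁ j₁ i₂ j₂ : Fin 3) (R : ℝ × ℝ → ℝ × ℝ → Prop) : ℝ :=
  ∑ᶠ q ∈ {q : (ℝ × ℝ) × (ℝ × ℝ) |
      q.1 ∈ CrossingL f i₁ j₁ ∧ q.2 ∈ CrossingL f i₂ j₂ ∧ R q.1 q.2},
    csignL f i₁ j₁ q.1 * csignL f i₂ j₂ q.2

/-- `⟨𝒳₁, G_D⟩` : a chord from `t` on strand 1 to strand 2, and a chord from strand 3 to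
`t′` on strand 1, with `t < t′`. -/
def pairL1 (f : Fin 3 → ℝ → E3) : ℝ := pairL f 0 1 2 0 fun p q => p.1 < q.2

/-- `⟨𝒳₂, G_D⟩` : a chord from strand 1 to `u` on strand 2, and a chord from strand 3 to
`u′` on strand 2, with `u < u′`. -/
def pairL2 (f : Fin 3 → ℝ → E3) : ℝ := pairL f 0 1 2 1 fun p q => p.2 < q.2

/-- `⟨𝒳₃, G_D⟩` : a chord from strand 1 to `v` on strand 3, and a chord from `v′` on
strand 3 to strand 2, with `v < v′`. -/
def pairL3 (f : Fin 3 → ℝ → E3) : ℝ := pairL f 0 2 2 1 fun p q => p.2 < q.1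

/-- `⟨𝒳′₁, G_D⟩` : as `𝒳₁` but with `t = t′` (a triple point). -/
def pairL1' (f : Fin 3 → ℝ → E3) : ℝ := pairL f 0 1 2 0 fun p q => p.1 = q.2

/-- `⟨𝒳′₂, G_D⟩` : as `𝒳₂` but with `u = u′` (a triple point). -/
def pairL2' (f : Fin 3 → ℝ → E3) : ℝ := pairL f 0 1 2 1 fun p q => p.2 = q.2

/-- `⟨𝒳′₃, G_D⟩` : as `𝒳₃` but with `v = v′` (a triple point). -/
def pairL3' (f : Fin 3 → ℝ → E3) : ℝ := pairL f 0 2 2 1 fun p q => p.2 = q.1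

/-! ### The localized unit 2-form `η` on `S²` -/

/-- The action of a 2×2 matrix on `ℝ³ = ℝ² × ℝ`, acting on the first two coordinates. -/
def act2 (A : Matrix (Fin 2) (Fin 2) ℝ) (v : E3) : E3 :=
  mk3 (A 0 0 * v 0 + A 0 1 * v 1) (A 1 0 * v 0 + A 1 1 * v 1) (v 2)

/-- `IsEtaForm ε g` says that `η = g · (standard area form of S²)` is a smooth 2-form on
`S²` such that: (i) `supp η` lies in the `ε`-neighbourhood of the north pole `N`;
(ii) `φ*η = det φ · η` for every `φ ∈ O(2) ⊆ O(3)` (since `φ* (area form) = det φ ·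
(area form)`, this amounts to `g ∘ φ = g`); (iii) `∫_{S²} η = 1`, i.e. the integral of
`g` against the surface measure of `S²` is `1`. -/
def IsEtaForm (ε : ℝ) (g : E3 → ℝ) : Prop :=
  ContDiff ℝ (⊤ : ℕ∞) g ∧
  (∀ v : E3, ‖v‖ = 1 → g v ≠ 0 → ‖v - NP‖ < ε) ∧
  (∀ A : Matrix (Fin 2) (Fin 2) ℝ, A * A.transpose = 1 →
    ∀ v : E3, ‖v‖ = 1 → g (act2 A v) = g v) ∧
  ∫ v : Metric.sphere (0 : E3) 1, g v ∂((volume : Measure E3).toSphere) = 1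

/-! ### Configuration space integrals -/

/-- `i`-th partial derivative of a map `ℝⁿ → ℝ³`. -/
def pdv {n : ℕ} (h : EuclideanSpace ℝ (Fin n) → E3) (i : Fin n)
    (x : EuclideanSpace ℝ (Fin n)) : E3 :=
  fderiv ℝ h x (EuclideanSpace.single i 1)

/-- The pullback `h*η` (for `η = g · (area form)`) evaluated at the point `x` on the
coordinate vectors `(e_i, e_j)`. -/
def form2 {n : ℕ} (g : E3 → ℝ) (h : EuclideanSpace ℝ (Fin n) → E3)
    (x : EuclideanSpace ℝ (Fin n)) (i j : Fin n) : ℝ :=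
  g (h x) * det3 (h x) (pdv h i x) (pdv h j x)

/-- `(h*η ∧ k*η)(e₀, e₁, e₂, e₃)` at `x`. -/
def wedge22 (g : E3 → ℝ) (h k : E4 → E3) (x : E4) : ℝ :=
  (1 / 4) * ∑ σ : Equiv.Perm (Fin 4),
    ((Equiv.Perm.sign σ : ℤ) : ℝ) * form2 g h x (σ 0) (σ 1) * form2 g k x (σ 2) (σ 3)

/-- `(h*η ∧ k*η ∧ l*η)(e₀, …, e₅)` at `x`. -/
def wedge222 (g : E3 → ℝ) (h k l : E6 → E3) (x : E6) : ℝ :=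
  (1 / 8) * ∑ σ : Equiv.Perm (Fin 6),
    ((Equiv.Perm.sign σ : ℤ) : ℝ) * form2 g h x (σ 0) (σ 1) * form2 g k x (σ 2) (σ 3) *
      form2 g l x (σ 4) (σ 5)

/-- The configuration space `C_X = {x₁ < x₂ < x₃ < x₄}`. -/
def CX : Set E4 := {x | x 0 < x 1 ∧ x 1 < x 2 ∧ x 2 < x 3}

/-- The integrand `ω_X = h₁₃*η ∧ h₄₂*η` for a long knot. -/
def omegaX (f : ℝ → E3) (g : E3 → ℝ) : E4 → ℝ :=
  wedge22 g (fun x => unitv (f (x 2) - f (x 0))) (fun x => unitv (f (x 1) - f (x 3)))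

/-- The configuration space integral `I_X(f)` of a long knot. -/
def IX (f : ℝ → E3) (g : E3 → ℝ) : ℝ := ∫ x in CX, omegaX f g x

/-- The free point `x₄ ∈ ℝ³` in a `Y`-configuration `(x₁,x₂,x₃;x₄) ∈ ℝ³ × ℝ³ = ℝ⁶`. -/
def ptY (x : E6) : E3 := mk3 (x 3) (x 4) (x 5)

/-- The configuration space `C_Y(f)` for a long knot. -/
def CY (f : ℝ → E3) : Set E6 :=
  {x | x 0 < x 1 ∧ x 1 < x 2 ∧ ptY x ≠ f (x 0) ∧ ptY x ≠ f (x 1) ∧ ptY x ≠ f (x 2)}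

/-- The integrand `ω_Y = h₁₄*η ∧ h₄₂*η ∧ h₃₄*η` for a long knot. -/
def omegaY (f : ℝ → E3) (g : E3 → ℝ) : E6 → ℝ :=
  wedge222 g (fun x => unitv (ptY x - f (x 0))) (fun x => unitv (f (x 1) - ptY x))
    (fun x => unitv (ptY x - f (x 2)))

/-- The configuration space integral `I_Y(f)` of a long knot. -/
def IY (f : ℝ → E3) (g : E3 → ℝ) : ℝ := ∫ x in CY f, omegaY f g x

def CL1 : Set E4 := {x | x 0 < x 1}
def CL2 : Set E4 := {x | x 1 < x 2}
def CL3 : Set E4 := {x | x 2 < x 3}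

/-- The integrand of `I_{𝒳₁}(f)` for a 3-component long link. -/
def omegaL1 (f : Fin 3 → ℝ → E3) (g : E3 → ℝ) : E4 → ℝ :=
  wedge22 g (fun x => unitv (f 1 (x 2) - f 0 (x 0))) (fun x => unitv (f 2 (x 3) - f 0 (x 1)))

/-- The integrand of `I_{𝒳₂}(f)` for a 3-component long link. -/
def omegaL2 (f : Fin 3 → ℝ → E3) (g : E3 → ℝ) : E4 → ℝ :=
  wedge22 g (fun x => unitv (f 1 (x 1) - f 0 (x 0))) (fun x => unitv (f 1 (x 2) - f 2 (x 3)))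

/-- The integrand of `I_{𝒳₃}(f)` for a 3-component long link. -/
def omegaL3 (f : Fin 3 → ℝ → E3) (g : E3 → ℝ) : E4 → ℝ :=
  wedge22 g (fun x => unitv (f 2 (x 2) - f 0 (x 0))) (fun x => unitv (f 1 (x 1) - f 2 (x 3)))

/-- The configuration space integral `I_{𝒳₁}(f)`. -/
def IL1 (f : Fin 3 → ℝ → E3) (g : E3 → ℝ) : ℝ := ∫ x in CL1, omegaL1 f g x

/-- The configuration space integral `I_{𝒳₂}(f)`. -/
def IL2 (f : Fin 3 → ℝ → E3) (g : E3 → ℝ) : ℝ := ∫ x in CL2, omegaL2 f g x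

/-- The configuration space integral `I_{𝒳₃}(f)`. -/
def IL3 (f : Fin 3 → ℝ → E3) (g : E3 → ℝ) : ℝ := ∫ x in CL3, omegaL3 f g x

/-- The configuration space `C_𝒴(f)` for a 3-component long link. -/
def CYL (f : Fin 3 → ℝ → E3) : Set E6 :=
  {x | ptY x ≠ f 0 (x 0) ∧ ptY x ≠ f 1 (x 1) ∧ ptY x ≠ f 2 (x 2)}

/-- The integrand `ω_𝒴 = h₁₄*η ∧ h₄₂*η ∧ h₃₄*η` for a 3-component long link. -/
def omegaYL (f : Fin 3 → ℝ → E3) (g : E3 → ℝ) : E6 → ℝ :=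
  wedge222 g (fun x => unitv (ptY x - f 0 (x 0))) (fun x => unitv (f 1 (x 1) - ptY x))
    (fun x => unitv (ptY x - f 2 (x 2)))

/-- The configuration space integral `I_𝒴(f)`. -/
def ILY (f : Fin 3 → ℝ → E3) (g : E3 → ℝ) : ℝ := ∫ x in CYL f, omegaYL f g x

/-! ### Model triple points -/

/-- The affine parametrization `t ↦ a + t • v` of a straight segment. -/
def seg (a v : E3) (t : ℝ) : E3 := a + t • v

/-- A model triple point: three straight segments `S₁, S₂, S₃` (indexed by `0, 1, 2`),
`S_k` parametrized by `seg (a k) (v k) : (-δ, δ) → ℝ³`, all parallel to the plane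
`N^⊥`, whose projections to `N^⊥` meet pairwise transversely at the single common point
which is the projection of each midpoint `a k`, and with `S₂` higher than `S₁`, `S₃`. -/
def IsModelTriple (a v : Fin 3 → E3) : Prop :=
  (∀ k, v k 2 = 0) ∧ (∀ k, v k ≠ 0) ∧
  pr12 (a 0) = pr12 (a 1) ∧ pr12 (a 1) = pr12 (a 2) ∧
  (∀ j k, j ≠ k → cross2 (v j) (v k) ≠ 0) ∧
  a 0 2 < a 1 2 ∧ a 2 2 < a 1 2

/-- A model triple point of type `(←, s₁, s₂, s₃)`: `S₁` passes over `S₃`, and the signs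
of the crossings `S₁–S₃`, `S₁–S₂`, `S₂–S₃` are `s₁, s₂, s₃` respectively. -/
def ModelLeft (a v : Fin 3 → E3) (s1 s2 s3 : ℝ) : Prop :=
  IsModelTriple a v ∧ a 2 2 < a 0 2 ∧
  s1 = Real.sign (cross2 (v 0) (v 2)) ∧
  s2 = Real.sign (cross2 (v 1) (v 0)) ∧
  s3 = Real.sign (cross2 (v 1) (v 2))

/-- A model triple point of type `(→, s₁, s₂, s₃)`: `S₃` passes over `S₁`, and the signs
of the crossings `S₁–S₃`, `S₁–S₂`, `S₂–S₃` are `s₁, s₂, s₃` respectively. -/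
def ModelRight (a v : Fin 3 → E3) (s1 s2 s3 : ℝ) : Prop :=
  IsModelTriple a v ∧ a 0 2 < a 2 2 ∧
  s1 = Real.sign (cross2 (v 2) (v 0)) ∧
  s2 = Real.sign (cross2 (v 1) (v 0)) ∧
  s3 = Real.sign (cross2 (v 1) (v 2))

/-- The cube `(-δ, δ)⁴ ⊆ ℝ⁴`. -/
def cube4 (δ : ℝ) : Set E4 := {x | ∀ i, |x i| < δ}

/-- The model configuration space integral `I_X^{X′₁}`: the two points `t₁ < t₂` lie on
`S₁`, the point `t₃` on `S₂` and the point `t₄` on `S₃`; the maps are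
`h₁₃ = unit (f₂(t₃) - f₁(t₁))` and `h₄₂ = unit (f₁(t₂) - f₃(t₄))`. -/
def IX1model (a v : Fin 3 → E3) (δ : ℝ) (g : E3 → ℝ) : ℝ :=
  ∫ x in cube4 δ ∩ {x : E4 | x 0 < x 1},
    wedge22 g (fun x => unitv (seg (a 1) (v 1) (x 2) - seg (a 0) (v 0) (x 0)))
      (fun x => unitv (seg (a 0) (v 0) (x 1) - seg (a 2) (v 2) (x 3))) x

/-- The model configuration space integral `I_X^{X′₂}` (`(X′₂, l)` for a model of type
`←`, `(X′₂, r)` for a model of type `→`): the two points `t₂ < t₃` lie on `S₂`, the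
point `t₁` on `S₁` and the point `t₄` on `S₃`; the maps are
`h₁₃ = unit (f₂(t₃) - f₁(t₁))` and `h₄₂ = unit (f₂(t₂) - f₃(t₄))`. -/
def IX2model (a v : Fin 3 → E3) (δ : ℝ) (g : E3 → ℝ) : ℝ :=
  ∫ x in cube4 δ ∩ {x : E4 | x 1 < x 2},
    wedge22 g (fun x => unitv (seg (a 1) (v 1) (x 2) - seg (a 0) (v 0) (x 0)))
      (fun x => unitv (seg (a 1) (v 1) (x 1) - seg (a 2) (v 2) (x 3))) x

/-- The model configuration space integral `I_X^{X′₃}`: the two points `t₃ < t₄` lie on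
`S₃`, the point `t₁` on `S₁` and the point `t₂` on `S₂`; the maps are
`h₁₃ = unit (f₃(t₃) - f₁(t₁))` and `h₄₂ = unit (f₂(t₂) - f₃(t₄))`. -/
def IX3model (a v : Fin 3 → E3) (δ : ℝ) (g : E3 → ℝ) : ℝ :=
  ∫ x in cube4 δ ∩ {x : E4 | x 2 < x 3},
    wedge22 g (fun x => unitv (seg (a 2) (v 2) (x 2) - seg (a 0) (v 0) (x 0)))
      (fun x => unitv (seg (a 1) (v 1) (x 1) - seg (a 2) (v 2) (x 3))) x

/-- The model `Y`-integral `I_Y^{s₁,s₂,s₃}` over `(-δ,δ)³ × ℝ³`: the point `t_k` lies on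
`S_k` and `x₄ ∈ ℝ³` is free; the maps are `h₁₄ = unit (x₄ - f₁(t₁))`,
`h₄₂ = unit (f₂(t₂) - x₄)` and `h₃₄ = unit (x₄ - f₃(t₃))`. -/
def IYmodel (a v : Fin 3 → E3) (δ : ℝ) (g : E3 → ℝ) : ℝ :=
  ∫ x in {x : E6 | |x 0| < δ ∧ |x 1| < δ ∧ |x 2| < δ ∧
      ptY x ≠ seg (a 0) (v 0) (x 0) ∧ ptY x ≠ seg (a 1) (v 1) (x 1) ∧
      ptY x ≠ seg (a 2) (v 2) (x 2)},
    wedge222 g (fun x => unitv (ptY x - seg (a 0) (v 0) (x 0)))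
      (fun x => unitv (seg (a 1) (v 1) (x 1) - ptY x))
      (fun x => unitv (ptY x - seg (a 2) (v 2) (x 2))) x

/-- Near every (triple or higher) multiple point of the diagram, the strands of the long
knot `f` are straight segments parallel to the plane `N^⊥`. -/
def StraightNearMultipleK (f : ℝ → E3) : Prop :=
  ∀ t u v : ℝ, t ≠ u → u ≠ v → t ≠ v →
    pr12 (f t) = pr12 (f u) → pr12 (f u) = pr12 (f v) →
    ∃ δ > (0 : ℝ), ∃ w : E3, w 2 = 0 ∧ ∀ s : ℝ, |s - t| < δ → f s = f t + (s - t) • w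

/-- Near every (triple or higher) multiple point of the diagram, the strands of the long
link `f` are straight segments parallel to the plane `N^⊥`. -/
def StraightNearMultipleL (f : Fin 3 → ℝ → E3) : Prop :=
  ∀ (i j k : Fin 3) (t u v : ℝ), (i, t) ≠ (j, u) → (j, u) ≠ (k, v) → (i, t) ≠ (k, v) →
    pr12 (f i t) = pr12 (f j u) → pr12 (f j u) = pr12 (f k v) →
    ∃ δ > (0 : ℝ), ∃ w : E3, w 2 = 0 ∧ ∀ s : ℝ, |s - t| < δ → f i s = f i t + (s - t) • w

/-! ### Closed 2-component links and the linking number -/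

/-- A smooth loop in `ℝ³`, parametrized with period 1 and injective on a period. -/
def IsLoop (f : ℝ → E3) : Prop :=
  ContDiff ℝ (⊤ : ℕ∞) f ∧ (∀ t, f (t + 1) = f t) ∧ (∀ t, deriv f t ≠ 0) ∧
    ∀ s t : ℝ, f s = f t → ∃ n : ℤ, t - s = n

/-- The diagram of the 2-component link `(f 0, f 1)` has only transverse double points. -/
def OnlyDouble2 (f : Fin 2 → ℝ → E3) : Prop :=
  (∀ i j s t, f i s ≠ f j t → pr12 (f i s) = pr12 (f j t) →
      cross2 (deriv (f i) s) (deriv (f j) t) ≠ 0) ∧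
  ∀ i j k s t u, f i s ≠ f j t → f j t ≠ f k u → f i s ≠ f k u →
    pr12 (f i s) = pr12 (f j t) → pr12 (f j t) = pr12 (f k u) → False

/-- The crossings of the diagram at which `f₂` passes over `f₁` (one parameter period). -/
def Crossing12 (f₁ f₂ : ℝ → E3) : Set (ℝ × ℝ) :=
  {p | p.1 ∈ Ico (0 : ℝ) 1 ∧ p.2 ∈ Ico (0 : ℝ) 1 ∧
    pr12 (f₁ p.1) = pr12 (f₂ p.2) ∧ pr3 (f₁ p.1) < pr3 (f₂ p.2)}

/-- The sum of the signs of the crossings of the diagram at which `f₂` passes over `f₁`;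
this is the linking number `lk(f₁, f₂)`, i.e. the mapping degree of
`h : S¹ × S¹ → S²`. -/
def lkSum (f₁ f₂ : ℝ → E3) : ℝ :=
  ∑ᶠ p ∈ Crossing12 f₁ f₂, Real.sign (cross2 (deriv f₂ p.2) (deriv f₁ p.1))

/-- The fundamental domain `[0,1) × [0,1)` of `S¹ × S¹`. -/
def sq01 : Set E2 := {x | x 0 ∈ Ico (0 : ℝ) 1 ∧ x 1 ∈ Ico (0 : ℝ) 1}

/-- `∫_{S¹×S¹} h*η` for `h(x₁,x₂) = unit (f₂(x₂) - f₁(x₁))`. -/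
def lkIntegral (f₁ f₂ : ℝ → E3) (g : E3 → ℝ) : ℝ :=
  ∫ x in sq01, form2 g (fun x : E2 => unitv (f₂ (x 1) - f₁ (x 0))) x 0 1

/-!
Project the sphere centrally from the origin to the plane of height `1`. In this gnomonic chart `η`
becomes a density `q` on `ℝ²` which is even, since `-1 ∈ O(2)`, supported near the origin and of
integral `1`. For two horizontal segments which cross over `N^⊥`, the direction from one to the
other is, in this chart, an invertible linear function `M t` of the two parameters, so the pullback
of `η` has density `det M * q (M t)`, again even, with integral `sign (det M)`. The two maps `h₁₃`
and `h₄₂` depend on disjoint pairs of parameters, hence over the whole cube the integral of the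
wedge product is, up to sign, the product of the signs of the two crossings. As the integrand is
even, imposing the order of two of the parameters halves the integral. This gives
`I_X^{X′₁} = s₁ s₂ / 2` and `I_X^{(X′₂,l)} = s₂ s₃ / 2`.
-/

section Gnomonic

open scoped Pointwise

variable {E V : Type*} [NormedAddCommGroup E] [NormedSpace ℝ E] [NormedAddCommGroup V]
  [NormedSpace ℝ V] (e : (ℝ × E) ≃L[ℝ] V)

theorem norm_map_one_prod_pos (u : E) : 0 < ‖e (1, u)‖ := by
  simp [Prod.ext_iff]

/-- The gnomonic chart of the unit sphere of `V ≃ ℝ × E`: the central projection of the affine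
hyperplane at height `1`. -/
def gnomonic (u : E) : Metric.sphere (0 : V) 1 :=
  ⟨NormedSpace.normalize (e (1, u)), by
    simp [NormedSpace.norm_normalize_eq_one_iff, Prod.ext_iff]⟩

/-- The open hemisphere of positive height, which is the image of the gnomonic chart. -/
def openHemisphere : Set (Metric.sphere (0 : V) 1) := {v | 0 < (e.symm v).1}

theorem measurableSet_openHemisphere [MeasurableSpace V] [BorelSpace V] :
    MeasurableSet (openHemisphere e) :=
  (isOpen_lt continuous_const (by fun_prop)).measurableSet

theorem continuous_gnomonic : Continuous (gnomonic e) := by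
  have hne (u : E) : ‖e (1, u)‖ ≠ 0 := (norm_map_one_prod_pos e u).ne'
  unfold gnomonic NormedSpace.normalize
  fun_prop (disch := assumption)

theorem map_prod_smul (z : ℝ) (u : E) :
    e (z, z • u) = (z * ‖e (1, u)‖) • (gnomonic e u : V) := by
  rw [mul_smul, gnomonic, NormedSpace.norm_smul_normalize, ← map_smul, Prod.smul_mk, smul_eq_mul,
    mul_one]

theorem preimage_Ioo_smul_inter_openHemisphere (s : Set (Metric.sphere (0 : V) 1)) :
    e ⁻¹' (Ioo (0 : ℝ) 1 • (Subtype.val '' (s ∩ openHemisphere e))) =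
      {p | 0 < p.1 ∧ gnomonic e (p.1⁻¹ • p.2) ∈ s ∧ p.1 < ‖e (1, p.1⁻¹ • p.2)‖⁻¹} := by
  ext ⟨z, w⟩
  constructor
  · rintro ⟨r, ⟨hr0, hr1⟩, _, ⟨v, ⟨hvs, hv⟩, rfl⟩, hrv : r • (v : V) = e (z, w)⟩
    have hz : z = r * (e.symm v).1 := by
      simpa using (congrArg (fun x => (e.symm x).1) hrv).symm
    have hz0 : 0 < z := hz ▸ mul_pos hr0 hv
    have hlift : e (1, z⁻¹ • w) = (z⁻¹ * r) • (v : V) := by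
      rw [mul_smul, hrv, ← map_smul, Prod.smul_mk, smul_eq_mul, inv_mul_cancel₀ hz0.ne']
    have hzr : 0 < z⁻¹ * r := by positivity
    have hgv : gnomonic e (z⁻¹ • w) = v := Subtype.ext <| by
      simp only [gnomonic, hlift, NormedSpace.normalize_smul_of_pos hzr]
      exact NormedSpace.normalize_eq_self_of_norm_eq_one (norm_eq_of_mem_sphere v)
    refine ⟨hz0, hgv ▸ hvs, ?_⟩
    rw [hlift, norm_smul, norm_eq_of_mem_sphere, mul_one, Real.norm_of_nonneg hzr.le, mul_inv,
      inv_inv]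
    exact lt_mul_of_one_lt_right hz0 ((one_lt_inv₀ hr0).2 hr1)
  · rintro ⟨hz : 0 < z, hs, hlt : z < ‖e (1, z⁻¹ • w)‖⁻¹⟩
    have hN := norm_map_one_prod_pos e (z⁻¹ • w)
    have hcone := map_prod_smul e z (z⁻¹ • w)
    rw [smul_inv_smul₀ hz.ne'] at hcone
    refine ⟨z * ‖e (1, z⁻¹ • w)‖, ⟨by positivity, (lt_inv_mul_iff₀' hN).1 (by simpa using hlt)⟩,
      _, ⟨_, ⟨hs, ?_⟩, rfl⟩, hcone.symm⟩
    simp [openHemisphere, gnomonic, NormedSpace.normalize, Prod.ext_iff]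

variable [FiniteDimensional ℝ E] [MeasurableSpace E] [BorelSpace E] [MeasurableSpace V]
  [BorelSpace V] {μ : Measure E} [μ.IsAddHaarMeasure] {ν : Measure V}

theorem measure_Ioo_smul_inter_openHemisphere {s : Set (Metric.sphere (0 : V) 1)}
    (hs : MeasurableSet s) (he : MeasurePreserving e (volume.prod μ) ν) :
    ν (Ioo (0 : ℝ) 1 • (Subtype.val '' (s ∩ openHemisphere e))) =
      ∫⁻ z in Ioi (0 : ℝ), μ.restrict (gnomonic e ⁻¹' s) {u | z < ‖e (1, u)‖⁻¹} *
        .ofReal (z ^ Module.finrank ℝ E) := by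
  have hT : MeasurableSet (gnomonic e ⁻¹' s) := (continuous_gnomonic e).measurable hs
  have hcone : MeasurableSet {p : ℝ × E | 0 < p.1 ∧ gnomonic e (p.1⁻¹ • p.2) ∈ s ∧
      p.1 < ‖e (1, p.1⁻¹ • p.2)‖⁻¹} := by
    have hdil : Measurable fun p : ℝ × E => p.1⁻¹ • p.2 := by fun_prop
    have hN : Measurable fun u : E => ‖e (1, u)‖⁻¹ := by fun_prop
    exact (measurableSet_lt measurable_const measurable_fst).inter
      ((hdil hT).inter (measurableSet_lt measurable_fst (hN.comp hdil)))
  rw [← he.measure_preimage_emb e.toHomeomorph.measurableEmbedding,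
    preimage_Ioo_smul_inter_openHemisphere, Measure.prod_apply hcone,
    ← lintegral_indicator measurableSet_Ioi]
  congr 1 with z
  by_cases hz : 0 < z
  · have hslice : Prod.mk z ⁻¹' {p : ℝ × E | 0 < p.1 ∧ gnomonic e (p.1⁻¹ • p.2) ∈ s ∧
        p.1 < ‖e (1, p.1⁻¹ • p.2)‖⁻¹} =
        (z⁻¹ • ·) ⁻¹' ({u | z < ‖e (1, u)‖⁻¹} ∩ gnomonic e ⁻¹' s) := by
      ext u
      simp [hz, and_comm]
    rw [hslice, Measure.addHaar_preimage_smul μ (inv_ne_zero hz.ne'),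
      indicator_of_mem (mem_Ioi.2 hz), Measure.restrict_apply' hT, inv_pow, inv_inv,
      abs_of_pos (pow_pos hz _), mul_comm]
  · simp [hz]

/-- The layer-cake formula for `‖e (1, u)‖⁻¹`, whose superlevel sets are the horizontal slices of
the cone over the hemisphere. -/
theorem toSphere_restrict_openHemisphere (he : MeasurePreserving e (volume.prod μ) ν) :
    ν.toSphere.restrict (openHemisphere e) =
      (μ.withDensity fun u => .ofReal (‖e (1, u)‖⁻¹ ^ Module.finrank ℝ V)).map (gnomonic e) := by
  have hfin : Module.finrank ℝ V = Module.finrank ℝ E + 1 := by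
    rw [← e.toLinearEquiv.finrank_eq, Module.finrank_prod, Module.finrank_self, add_comm]
  have hg : Measurable (gnomonic e) := (continuous_gnomonic e).measurable
  ext s hs
  have hlayer := lintegral_rpow_eq_lintegral_meas_lt_mul (μ.restrict (gnomonic e ⁻¹' s))
    (f := fun u => ‖e (1, u)‖⁻¹) (Eventually.of_forall fun u => by simp)
    (by fun_prop) (p := Module.finrank ℝ V) (Nat.cast_pos.2 (by omega))
  rw [Measure.restrict_apply hs,
    Measure.toSphere_apply' _ (hs.inter (measurableSet_openHemisphere e)),
    measure_Ioo_smul_inter_openHemisphere e hs he, Measure.map_apply hg hs,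
    withDensity_apply _ (hg hs)]
  simp only [hfin, Real.rpow_natCast, Nat.cast_add, Nat.cast_one, add_sub_cancel_right] at hlayer ⊢
  rw [← ENNReal.ofReal_natCast]
  exact_mod_cast hlayer.symm

theorem setIntegral_openHemisphere (he : MeasurePreserving e (volume.prod μ) ν)
    {f : Metric.sphere (0 : V) 1 → ℝ}
    (hf : AEStronglyMeasurable f (ν.toSphere.restrict (openHemisphere e))) :
    ∫ v in openHemisphere e, f v ∂ν.toSphere =
      ∫ u, ‖e (1, u)‖⁻¹ ^ Module.finrank ℝ V * f (gnomonic e u) ∂μ := by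
  rw [toSphere_restrict_openHemisphere e he] at hf ⊢
  rw [integral_map (continuous_gnomonic e).measurable.aemeasurable hf,
    integral_withDensity_eq_integral_toReal_smul (by fun_prop)
      (Eventually.of_forall fun _ => ENNReal.ofReal_lt_top)]
  simp only [ENNReal.toReal_ofReal (pow_nonneg (inv_nonneg.2 (norm_nonneg _)) _), smul_eq_mul]

end Gnomonic

section SolidAngle

variable {n : ℕ} {f : EuclideanSpace ℝ (Fin n) → E3} {x : EuclideanSpace ℝ (Fin n)}

theorem exists_hasFDerivAt_unitv {u : E3} (hu : u ≠ 0) :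
    ∃ c : E3 →L[ℝ] ℝ, HasFDerivAt unitv (‖u‖⁻¹ • .id ℝ E3 + c.smulRight u) u :=
  ⟨_, ((differentiableAt_id.norm ℝ hu).inv (norm_ne_zero_iff.2 hu)).hasFDerivAt.smul
    (hasFDerivAt_id u)⟩

theorem det3_smul_smul_add_smul (u w w' : E3) (r c c' : ℝ) :
    det3 (r • u) (r • w + c • u) (r • w' + c' • u) = r ^ 3 * det3 u w w' := by
  simp only [det3, PiLp.add_apply, PiLp.smul_apply, smul_eq_mul]
  ring

theorem exists_pdv_unitv_comp (hf : DifferentiableAt ℝ f x) (hx : f x ≠ 0) :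
    ∃ c : E3 →L[ℝ] ℝ, ∀ i, pdv (fun y => unitv (f y)) i x =
      ‖f x‖⁻¹ • pdv f i x + c (pdv f i x) • f x := by
  obtain ⟨c, hc⟩ := exists_hasFDerivAt_unitv hx
  refine ⟨c, fun i => ?_⟩
  have hcomp : HasFDerivAt (fun y => unitv (f y)) _ x := hc.comp x hf.hasFDerivAt
  rw [pdv, hcomp.fderiv]
  rfl

/-- The homogeneous extension of degree `-3` of a function `g` on the unit sphere: the pullback of
`g · area` along `unitv` is `solidAngleDensity g v * det3 v`. -/
def solidAngleDensity (g : E3 → ℝ) (v : E3) : ℝ := g (unitv v) * (‖v‖ ^ 3)⁻¹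

theorem solidAngleDensity_smul (g : E3 → ℝ) {r : ℝ} (hr : 0 < r) (v : E3) :
    solidAngleDensity g (r • v) = (r ^ 3)⁻¹ * solidAngleDensity g v := by
  have hunit : unitv (r • v) = unitv v := NormedSpace.normalize_smul_of_pos hr v
  rw [solidAngleDensity, solidAngleDensity, hunit, norm_smul, Real.norm_of_nonneg hr.le, mul_pow,
    mul_inv]
  ring

theorem form2_unitv_comp (g : E3 → ℝ) (hf : DifferentiableAt ℝ f x) (hx : f x ≠ 0) (i j : Fin n) :
    form2 g (fun y => unitv (f y)) x i j =
      solidAngleDensity g (f x) * det3 (f x) (pdv f i x) (pdv f j x) := by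
  obtain ⟨c, hc⟩ := exists_pdv_unitv_comp hf hx
  rw [form2, hc, hc, unitv, det3_smul_smul_add_smul, solidAngleDensity, unitv, inv_pow, mul_assoc]

theorem pdv_unitv_comp_eq_zero (hf : DifferentiableAt ℝ f x) (hx : f x ≠ 0) {i : Fin n}
    (hi : pdv f i x = 0) : pdv (fun y => unitv (f y)) i x = 0 := by
  obtain ⟨c, hc⟩ := exists_pdv_unitv_comp hf hx
  simp [hc, hi]

end SolidAngle

section Wedge

theorem det3_zero_middle (p w : E3) : det3 p 0 w = 0 := by simp [det3]

theorem det3_swap (p v w : E3) : det3 p w v = -det3 p v w := by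
  simp only [det3]
  ring

theorem det3_zero_right (p v : E3) : det3 p v 0 = 0 := by simp [det3]

theorem det3_self_right (p v : E3) : det3 p v v = 0 := by
  linarith [det3_swap p v v]

theorem form2_eq_mul_of_pdv_eq_zero {n : ℕ} (g : E3 → ℝ) {h : EuclideanSpace ℝ (Fin n) → E3}
    {x : EuclideanSpace ℝ (Fin n)} {a b : Fin n}
    (hab : a ≠ b) (h0 : ∀ k, k ≠ a → k ≠ b → pdv h k x = 0) (i j : Fin n) :
    form2 g h x i j = form2 g h x a b *
      ((if i = a ∧ j = b then 1 else 0) - (if i = b ∧ j = a then 1 else 0) : ℤ) := by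
  by_cases hi : i ≠ a ∧ i ≠ b
  · simp [form2, h0 i hi.1 hi.2, det3_zero_middle, hi.1, hi.2]
  by_cases hj : j ≠ a ∧ j ≠ b
  · simp [form2, h0 j hj.1 hj.2, det3_zero_right, hj.1, hj.2]
  have hi' : i = a ∨ i = b := by tauto
  have hj' : j = a ∨ j = b := by tauto
  rcases hi' with rfl | rfl <;> rcases hj' with rfl | rfl
  · simp [form2, det3_self_right, hab]
  · simp [hab]
  · simp [form2, det3_swap _ (pdv h j x), hab.symm]
  · simp [form2, det3_self_right, hab.symm]

/-- The sign is that of the shuffle `(0, 2, 1, 3)`. -/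
theorem wedge22_eq_neg_mul_form2 (g : E3 → ℝ) {h k : E4 → E3} {x : E4}
    (hh : ∀ l, l ≠ 0 → l ≠ 2 → pdv h l x = 0) (hk : ∀ l, l ≠ 1 → l ≠ 3 → pdv k l x = 0) :
    wedge22 g h k x = -(form2 g h x 0 2 * form2 g k x 1 3) := by
  set c : Fin 4 → Fin 4 → Fin 4 → Fin 4 → ℤ := fun a b i j =>
    (if i = a ∧ j = b then 1 else 0) - (if i = b ∧ j = a then 1 else 0)
  have hperm : ∑ σ : Equiv.Perm (Fin 4),
      (Equiv.Perm.sign σ : ℤ) * c 0 2 (σ 0) (σ 1) * c 1 3 (σ 2) (σ 3) = -4 := by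
    decide
  calc wedge22 g h k x
      = 1 / 4 * ∑ σ : Equiv.Perm (Fin 4), form2 g h x 0 2 * form2 g k x 1 3 *
          ((Equiv.Perm.sign σ * c 0 2 (σ 0) (σ 1) * c 1 3 (σ 2) (σ 3) : ℤ) : ℝ) := by
        rw [wedge22]
        congr! 2 with σ
        rw [form2_eq_mul_of_pdv_eq_zero g (by decide) hh (σ 0) (σ 1),
          form2_eq_mul_of_pdv_eq_zero g (by decide) hk (σ 2) (σ 3), Int.cast_mul, Int.cast_mul]
        ring
    _ = -(form2 g h x 0 2 * form2 g k x 1 3) := by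
        rw [← Finset.mul_sum, ← Int.cast_sum, hperm]
        push_cast
        ring

end Wedge

section Chart

/-- The decomposition of `ℝ³` into the `N`-coordinate and the first two coordinates. -/
def heightEquiv : (ℝ × (Fin 2 → ℝ)) ≃L[ℝ] E3 :=
  LinearEquiv.toContinuousLinearEquiv
    { toFun := fun p => mk3 (p.2 0) (p.2 1) p.1
      invFun := fun v => (v 2, ![v 0, v 1])
      map_add' := fun p q => by ext i; fin_cases i <;> rfl
      map_smul' := fun r p => by ext i; fin_cases i <;> rfl
      left_inv := fun p => by ext i; exacts [rfl, by fin_cases i <;> rfl]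
      right_inv := fun v => by ext i; fin_cases i <;> rfl }

theorem measurePreserving_heightEquiv :
    MeasurePreserving heightEquiv (volume.prod volume) volume := by
  have hsplit := volume_preserving_piFinSuccAbove (fun _ : Fin 3 => ℝ) 2
  have hcomp : ⇑heightEquiv =
      WithLp.toLp 2 ∘ (MeasurableEquiv.piFinSuccAbove (fun _ : Fin 3 => ℝ) 2).symm := by
    refine funext fun p => PiLp.ext fun i => ?_
    fin_cases i <;> rfl
  rw [hcomp]
  exact (PiLp.volume_preserving_toLp (Fin 3)).comp hsplit.symm

/-- The point of the plane of height `1` above `u`. -/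
def gnomonicLift (u : Fin 2 → ℝ) : E3 := heightEquiv (1, u)

/-- The density of `η = g · area` in the gnomonic chart `u ↦ unitv (gnomonicLift u)`. -/
def gnomonicDensity (g : E3 → ℝ) (u : Fin 2 → ℝ) : ℝ := solidAngleDensity g (gnomonicLift u)

theorem gnomonicLift_zero (u : Fin 2 → ℝ) : gnomonicLift u 0 = u 0 := rfl

theorem gnomonicLift_one (u : Fin 2 → ℝ) : gnomonicLift u 1 = u 1 := rfl

theorem gnomonicLift_two (u : Fin 2 → ℝ) : gnomonicLift u 2 = 1 := rfl

theorem norm_gnomonicLift_pos (u : Fin 2 → ℝ) : 0 < ‖gnomonicLift u‖ :=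
  norm_map_one_prod_pos heightEquiv u

theorem norm_unitv_gnomonicLift (u : Fin 2 → ℝ) : ‖unitv (gnomonicLift u)‖ = 1 :=
  NormedSpace.norm_normalize_eq_one_iff.2 (norm_pos_iff.1 (norm_gnomonicLift_pos u))

theorem continuous_gnomonicLift : Continuous gnomonicLift := by
  unfold gnomonicLift
  fun_prop

theorem continuous_gnomonicDensity {g : E3 → ℝ} (hg : Continuous g) :
    Continuous (gnomonicDensity g) := by
  have hlift := continuous_gnomonicLift
  have hne (u : Fin 2 → ℝ) : ‖gnomonicLift u‖ ≠ 0 := (norm_gnomonicLift_pos u).ne'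
  have hne3 (u : Fin 2 → ℝ) : ‖gnomonicLift u‖ ^ 3 ≠ 0 := pow_ne_zero _ (hne u)
  unfold gnomonicDensity solidAngleDensity unitv
  fun_prop (disch := assumption)

variable {ε : ℝ} {g : E3 → ℝ}

theorem IsEtaForm.gnomonicDensity_neg (hg : IsEtaForm ε g) (u : Fin 2 → ℝ) :
    gnomonicDensity g (-u) = gnomonicDensity g u := by
  have hnorm : ‖gnomonicLift (-u)‖ = ‖gnomonicLift u‖ := by
    simp [EuclideanSpace.norm_eq, Fin.sum_univ_three, gnomonicLift_zero, gnomonicLift_one,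
      gnomonicLift_two]
  have hact : act2 (-1) (unitv (gnomonicLift u)) = unitv (gnomonicLift (-u)) := by
    refine PiLp.ext fun i => ?_
    fin_cases i <;> simp [act2, unitv, mk3, hnorm, gnomonicLift_zero, gnomonicLift_one,
      gnomonicLift_two]
  have hinv : g (unitv (gnomonicLift (-u))) = g (unitv (gnomonicLift u)) :=
    hact ▸ hg.2.2.1 (-1) (by simp) _ (norm_unitv_gnomonicLift u)
  rw [gnomonicDensity, gnomonicDensity, solidAngleDensity, solidAngleDensity, hinv, hnorm]

theorem half_lt_of_norm_sub_NP_lt {v : E3} (hε : ε ≤ 1 / 2) (hv : ‖v - NP‖ < ε) : 1 / 2 < v 2 := by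
  have hcoord : |v 2 - 1| < ε := (PiLp.norm_apply_le (v - NP) 2).trans_lt hv
  linarith [(abs_lt.1 hcoord).1]

theorem IsEtaForm.norm_lt_of_gnomonicDensity_ne_zero (hg : IsEtaForm ε g) (hε : ε ≤ 1 / 2)
    {u : Fin 2 → ℝ} (hu : gnomonicDensity g u ≠ 0) : ‖u‖ < 2 * ε := by
  set v := unitv (gnomonicLift u) with hvdef
  have hv : ‖v - NP‖ < ε := hg.2.1 v (norm_unitv_gnomonicLift u) (left_ne_zero_of_mul hu)
  have hv2 : 1 / 2 < v 2 := half_lt_of_norm_sub_NP_lt hε hv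
  have hcoord (i : Fin 2) : v 2 * u i = (v - NP) i.castSucc := by
    fin_cases i <;> simp [hvdef, unitv, NP, mk3, gnomonicLift_zero, gnomonicLift_one,
      gnomonicLift_two]
  have hε0 : 0 < ε := (norm_nonneg _).trans_lt hv
  refine (pi_norm_lt_iff (by positivity)).2 fun i => ?_
  have hi : v 2 * |u i| < ε := by
    rw [← abs_of_pos (one_half_pos.trans hv2), ← abs_mul, hcoord]
    exact (PiLp.norm_apply_le (v - NP) _).trans_lt hv
  rw [Real.norm_eq_abs]
  nlinarith [abs_nonneg (u i)]

theorem IsEtaForm.integrable_gnomonicDensity (hg : IsEtaForm ε g) (hε : ε ≤ 1 / 2) :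
    Integrable (gnomonicDensity g) := by
  refine (continuous_gnomonicDensity hg.1.continuous).integrable_of_hasCompactSupport
    (.intro (isCompact_closedBall 0 1) fun u hu => ?_)
  by_contra hne
  have := hg.norm_lt_of_gnomonicDensity_ne_zero hε hne
  exact hu (mem_closedBall_zero_iff.2 (by linarith))

theorem IsEtaForm.integral_gnomonicDensity (hg : IsEtaForm ε g) (hε : ε ≤ 1 / 2) :
    ∫ u, gnomonicDensity g u = 1 := by
  have hvanish (v : Metric.sphere (0 : E3) 1) (hv : v ∉ openHemisphere heightEquiv) : g v = 0 := by
    by_contra hne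
    have := half_lt_of_norm_sub_NP_lt hε (hg.2.1 v (norm_eq_of_mem_sphere v) hne)
    exact hv (one_half_pos.trans this)
  have hcont : Continuous fun v : Metric.sphere (0 : E3) 1 => g v :=
    hg.1.continuous.comp continuous_subtype_val
  rw [← hg.2.2.2, ← setIntegral_eq_integral_of_forall_compl_eq_zero hvanish,
    setIntegral_openHemisphere heightEquiv measurePreserving_heightEquiv
      hcont.aestronglyMeasurable]
  congr with u
  rw [gnomonicDensity, solidAngleDensity, mul_comm, finrank_euclideanSpace_fin, inv_pow]
  rfl

end Chart

section EvenIntegrals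

variable {V E : Type*} [NormedAddCommGroup V] [NormedSpace ℝ V] [FiniteDimensional ℝ V]
  [MeasurableSpace V] [BorelSpace V] [NormedAddCommGroup E] [NormedSpace ℝ E]

theorem setIntegral_linearMap_pos_of_even {μ : Measure V} [μ.IsAddHaarMeasure] {F : V → E}
    (hF : Integrable F μ) (heven : ∀ x, F (-x) = F x) {L : V →ₗ[ℝ] ℝ} (hL : L ≠ 0) :
    ∫ x in {x | 0 < L x}, F x ∂μ = (2⁻¹ : ℝ) • ∫ x, F x ∂μ := by
  have hcont : Continuous L := L.continuous_of_finiteDimensional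
  have hmeas : MeasurableSet {x | 0 < L x} := (isOpen_lt continuous_const hcont).measurableSet
  have hmeas' : MeasurableSet {x | L x < 0} := (isOpen_lt hcont continuous_const).measurableSet
  have hneg : ∫ x in {x | L x < 0}, F x ∂μ = ∫ x in {x | 0 < L x}, F x ∂μ := by
    rw [← integral_indicator hmeas', ← integral_indicator hmeas, ← integral_neg_eq_self]
    simp [indicator, heven]
  have hker : ∀ᵐ x ∂μ, L x ≠ 0 := by
    have := Measure.addHaar_submodule μ (LinearMap.ker L) (mt LinearMap.ker_eq_top.1 hL)
    rwa [ae_iff, show {x | ¬L x ≠ 0} = LinearMap.ker L by ext; simp]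
  have hcompl : ∫ x in {x | 0 < L x}ᶜ, F x ∂μ = ∫ x in {x | L x < 0}, F x ∂μ :=
    setIntegral_congr_set <| hker.mono fun x hx =>
      propext (not_lt.trans hx.le_iff_lt)
  rw [← integral_add_compl hmeas hF, hcompl, hneg, ← two_smul ℝ, smul_smul]
  norm_num

end EvenIntegrals

section MatrixChange

variable {ι E : Type*} [Fintype ι] [DecidableEq ι] {M : Matrix ι ι ℝ}

open scoped Matrix

theorem measurableEmbedding_mulVec (hM : M.det ≠ 0) : MeasurableEmbedding (M *ᵥ ·) :=
  (LinearMap.isClosedEmbedding_of_injective (f := Matrix.toLin' M)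
    (Matrix.ker_toLin'_eq_bot_iff.2 fun _ => Matrix.eq_zero_of_mulVec_eq_zero hM)
    ).measurableEmbedding

theorem map_mulVec_volume (hM : M.det ≠ 0) :
    Measure.map (M *ᵥ ·) volume = ENNReal.ofReal |M.det⁻¹| • (volume : Measure (ι → ℝ)) :=
  Real.map_matrix_volume_pi_eq_smul_volume_pi hM

variable [NormedAddCommGroup E]

theorem integrable_comp_mulVec (hM : M.det ≠ 0) {F : (ι → ℝ) → E} (hF : Integrable F) :
    Integrable fun t => F (M *ᵥ t) := by
  refine (measurableEmbedding_mulVec hM).integrable_map_iff.1 ?_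
  rw [map_mulVec_volume hM]
  exact hF.smul_measure ENNReal.ofReal_ne_top

theorem integral_comp_mulVec [NormedSpace ℝ E] (hM : M.det ≠ 0) (F : (ι → ℝ) → E) :
    ∫ t, F (M *ᵥ t) = |M.det⁻¹| • ∫ u, F u := by
  rw [← (measurableEmbedding_mulVec hM).integral_map, map_mulVec_volume hM, integral_smul_measure,
    ENNReal.toReal_ofReal (abs_nonneg _)]

end MatrixChange

theorem eventually_norm_lt_of_norm_map_lt {E F : Type*} [NormedAddCommGroup E] [NormedSpace ℝ E]
    [FiniteDimensional ℝ E] [NormedAddCommGroup F] [NormedSpace ℝ F] {f : E →ₗ[ℝ] F}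
    (hf : LinearMap.ker f = ⊥) {δ : ℝ} (hδ : 0 < δ) :
    ∀ᶠ ρ in 𝓝 (0 : ℝ), ∀ t, ‖f t‖ < ρ → ‖t‖ < δ := by
  obtain ⟨K, hK, hanti⟩ := f.exists_antilipschitzWith hf
  have hlim : Tendsto (fun ρ : ℝ => (K : ℝ) * ρ) (𝓝 0) (𝓝 0) :=
    (continuous_const_mul (K : ℝ)).tendsto' 0 0 (mul_zero _)
  filter_upwards [hlim.eventually_lt_const hδ] with ρ hρ t ht
  calc ‖t‖ ≤ K * ‖f t‖ := ZeroHomClass.bound_of_antilipschitz f hanti t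
    _ ≤ K * ρ := by gcongr
    _ < δ := hρ

section SplitCoordinates

variable {ι κ τ : Type*}

/-- The splitting of the coordinates indexed by `τ ≃ ι ⊕ κ` into two blocks. -/
def splitCoordinates (e : ι ⊕ κ ≃ τ) : EuclideanSpace ℝ τ ≃ᵐ (ι → ℝ) × (κ → ℝ) :=
  (MeasurableEquiv.toLp 2 (τ → ℝ)).symm.trans <|
    (MeasurableEquiv.piCongrLeft (fun _ => ℝ) e).symm.trans <|
      MeasurableEquiv.sumPiEquivProdPi fun _ => ℝ

theorem splitCoordinates_apply (e : ι ⊕ κ ≃ τ) (x : EuclideanSpace ℝ τ) :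
    splitCoordinates e x = (fun i => x (e (.inl i)), fun j => x (e (.inr j))) := rfl

theorem measurePreserving_splitCoordinates [Fintype ι] [Fintype κ] [Fintype τ]
    (e : ι ⊕ κ ≃ τ) :
    MeasurePreserving (splitCoordinates e) :=
  ((EuclideanSpace.volume_preserving_symm_measurableEquiv_toLp τ).trans
    (volume_measurePreserving_piCongrLeft (fun _ => ℝ) e).symm).trans
      (volume_measurePreserving_sumPiEquivProdPi fun _ => ℝ)

end SplitCoordinates

section Crossing

open scoped Matrix

/-- A crossing of two straight strands over the plane `N^⊥`, seen from the direction map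
`(s, t) ↦ unitv (A + s • c + t • d)`: the strands differ by `A` at the crossing, which is a
positive multiple of `N`, and `c`, `d` are horizontal and transverse. -/
structure IsCrossing (A c d : E3) : Prop where
  pr12_eq_zero : pr12 A = 0
  height_pos : 0 < A 2
  left_horizontal : c 2 = 0
  right_horizontal : d 2 = 0
  transverse : cross2 c d ≠ 0

/-- The matrix of the direction map of a crossing in the gnomonic chart. -/
def crossingMatrix (A c d : E3) : Matrix (Fin 2) (Fin 2) ℝ :=
  !![c 0 / A 2, d 0 / A 2; c 1 / A 2, d 1 / A 2]

/-- The density of the pullback of `η = g · area` by the direction map of a crossing. -/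
def crossingDensity (g : E3 → ℝ) (A c d : E3) (t : Fin 2 → ℝ) : ℝ :=
  (crossingMatrix A c d).det * gnomonicDensity g (crossingMatrix A c d *ᵥ t)

variable {A c d : E3} {g : E3 → ℝ} {ε : ℝ}

theorem IsCrossing.symm (hC : IsCrossing A c d) : IsCrossing A d c where
  pr12_eq_zero := hC.pr12_eq_zero
  height_pos := hC.height_pos
  left_horizontal := hC.right_horizontal
  right_horizontal := hC.left_horizontal
  transverse h := hC.transverse <| by
    rw [cross2] at h ⊢
    linarith

theorem cross2_neg_right (c d : E3) : cross2 c (-d) = -cross2 c d := by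
  simp only [cross2, PiLp.neg_apply]
  ring

theorem cross2_neg_left_eq_swap (c d : E3) : cross2 (-c) d = cross2 d c := by
  simp only [cross2, PiLp.neg_apply]
  ring

theorem det_crossingMatrix (A c d : E3) : (crossingMatrix A c d).det = cross2 c d / A 2 ^ 2 := by
  rw [crossingMatrix, Matrix.det_fin_two_of, cross2]
  ring

theorem IsCrossing.det_crossingMatrix_ne_zero (hC : IsCrossing A c d) :
    (crossingMatrix A c d).det ≠ 0 := by
  rw [det_crossingMatrix]
  exact div_ne_zero hC.transverse (pow_ne_zero _ hC.height_pos.ne')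

theorem IsCrossing.add_smul_add_smul_eq (hC : IsCrossing A c d) (s t : ℝ) :
    A + s • c + t • d = A 2 • gnomonicLift (crossingMatrix A c d *ᵥ ![s, t]) := by
  obtain ⟨h0, h1⟩ := Prod.ext_iff.1 hC.pr12_eq_zero
  have hA := hC.height_pos.ne'
  refine PiLp.ext fun i => ?_
  fin_cases i
  · simp [crossingMatrix, gnomonicLift_zero, show A 0 = 0 from h0, mul_add, mul_left_comm (A 2),
      mul_div_cancel₀ _ hA]
  · simp [crossingMatrix, gnomonicLift_one, show A 1 = 0 from h1, mul_add, mul_left_comm (A 2),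
      mul_div_cancel₀ _ hA]
  · simp [gnomonicLift_two, hC.left_horizontal, hC.right_horizontal]

theorem det3_of_horizontal (p : E3) (hc : c 2 = 0) (hd : d 2 = 0) :
    det3 p c d = p 2 * cross2 c d := by
  rw [det3, cross2, hc, hd]
  ring

theorem hasFDerivAt_add_smul_add_smul {n : ℕ} (A c d : E3) (i j : Fin n)
    (x : EuclideanSpace ℝ (Fin n)) :
    HasFDerivAt (fun y : EuclideanSpace ℝ (Fin n) => A + y i • c + y j • d)
      ((EuclideanSpace.proj i : _ →L[ℝ] ℝ).smulRight c +
        (EuclideanSpace.proj j : _ →L[ℝ] ℝ).smulRight d) x := by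
  have hsmul (k : Fin n) (w : E3) :=
    ((EuclideanSpace.proj k : EuclideanSpace ℝ (Fin n) →L[ℝ] ℝ).smulRight w).hasFDerivAt (x := x)
  exact ((hsmul i c).const_add A).add (hsmul j d)

theorem pdv_add_smul_add_smul {n : ℕ} (A c d : E3) (i j k : Fin n)
    (x : EuclideanSpace ℝ (Fin n)) :
    pdv (fun y : EuclideanSpace ℝ (Fin n) => A + y i • c + y j • d) k x =
      (if i = k then c else 0) + (if j = k then d else 0) := by
  rw [pdv, (hasFDerivAt_add_smul_add_smul A c d i j x).fderiv]
  simp [ite_smul]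

theorem IsCrossing.add_smul_add_smul_ne_zero (hC : IsCrossing A c d) (s t : ℝ) :
    A + s • c + t • d ≠ 0 := by
  rw [hC.add_smul_add_smul_eq]
  exact smul_ne_zero hC.height_pos.ne' (norm_pos_iff.1 (norm_gnomonicLift_pos _))

theorem IsCrossing.form2_direction (hC : IsCrossing A c d) (g : E3 → ℝ) {n : ℕ} {i j : Fin n}
    (hij : i ≠ j) (x : EuclideanSpace ℝ (Fin n)) :
    form2 g (fun y => unitv (A + y i • c + y j • d)) x i j =
      crossingDensity g A c d ![x i, x j] := by
  have hA := hC.height_pos.ne'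
  rw [form2_unitv_comp g (hasFDerivAt_add_smul_add_smul A c d i j x).differentiableAt
      (hC.add_smul_add_smul_ne_zero _ _), pdv_add_smul_add_smul, pdv_add_smul_add_smul,
    if_pos rfl, if_neg hij.symm, if_neg hij, if_pos rfl, add_zero, zero_add,
    det3_of_horizontal _ hC.left_horizontal hC.right_horizontal, hC.add_smul_add_smul_eq,
    solidAngleDensity_smul g hC.height_pos, PiLp.smul_apply, gnomonicLift_two, crossingDensity,
    gnomonicDensity, det_crossingMatrix, smul_eq_mul]
  field_simp

theorem IsCrossing.pdv_direction_eq_zero (hC : IsCrossing A c d) {n : ℕ} {i j k : Fin n}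
    (hi : k ≠ i) (hj : k ≠ j) (x : EuclideanSpace ℝ (Fin n)) :
    pdv (fun y => unitv (A + y i • c + y j • d)) k x = 0 := by
  refine pdv_unitv_comp_eq_zero (hasFDerivAt_add_smul_add_smul A c d i j x).differentiableAt
    (hC.add_smul_add_smul_ne_zero _ _) ?_
  rw [pdv_add_smul_add_smul, if_neg hi.symm, if_neg hj.symm, add_zero]

theorem IsEtaForm.crossingDensity_neg (hg : IsEtaForm ε g) (t : Fin 2 → ℝ) :
    crossingDensity g A c d (-t) = crossingDensity g A c d t := by
  rw [crossingDensity, Matrix.mulVec_neg, hg.gnomonicDensity_neg, crossingDensity]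

theorem IsCrossing.integrable_crossingDensity (hC : IsCrossing A c d) (hg : IsEtaForm ε g)
    (hε : ε ≤ 1 / 2) : Integrable (crossingDensity g A c d) :=
  (integrable_comp_mulVec hC.det_crossingMatrix_ne_zero
    (hg.integrable_gnomonicDensity hε)).const_mul _

theorem IsCrossing.integral_crossingDensity (hC : IsCrossing A c d) (hg : IsEtaForm ε g)
    (hε : ε ≤ 1 / 2) : ∫ t, crossingDensity g A c d t = Real.sign (cross2 c d) := by
  have hH : 0 < A 2 ^ 2 := pow_pos hC.height_pos 2
  simp only [crossingDensity]
  rw [integral_const_mul, integral_comp_mulVec hC.det_crossingMatrix_ne_zero,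
    hg.integral_gnomonicDensity hε, det_crossingMatrix, smul_eq_mul, mul_one]
  rcases hC.transverse.lt_or_gt with h | h
  · rw [Real.sign_of_neg h, abs_of_neg (inv_neg''.2 (div_neg_of_neg_of_pos h hH)), mul_neg,
      mul_inv_cancel₀ (div_neg_of_neg_of_pos h hH).ne]
  · rw [Real.sign_of_pos h, abs_of_pos (inv_pos.2 (div_pos h hH)),
      mul_inv_cancel₀ (div_pos h hH).ne']

theorem eventually_le_half : ∀ᶠ ε in 𝓝[>] (0 : ℝ), ε ≤ 1 / 2 :=
  nhdsWithin_le_nhds (eventually_le_nhds one_half_pos)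

theorem IsCrossing.eventually_norm_lt_of_crossingDensity_ne_zero (hC : IsCrossing A c d) {δ : ℝ}
    (hδ : 0 < δ) :
    ∀ᶠ ε in 𝓝[>] (0 : ℝ), ∀ g, IsEtaForm ε g → ∀ t, crossingDensity g A c d t ≠ 0 → ‖t‖ < δ := by
  have hker : LinearMap.ker (Matrix.toLin' (crossingMatrix A c d)) = ⊥ :=
    Matrix.ker_toLin'_eq_bot_iff.2 fun _ =>
      Matrix.eq_zero_of_mulVec_eq_zero hC.det_crossingMatrix_ne_zero
  have hlim : Tendsto (fun ε : ℝ => 2 * ε) (𝓝[>] 0) (𝓝 0) :=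
    tendsto_nhdsWithin_of_tendsto_nhds <|
      (continuous_const_mul (2 : ℝ)).tendsto' 0 0 (mul_zero _)
  filter_upwards [eventually_le_half, hlim.eventually (eventually_norm_lt_of_norm_map_lt hker hδ)]
    with ε hε hρ g hg t ht
  exact hρ t (hg.norm_lt_of_gnomonicDensity_ne_zero hε (right_ne_zero_of_mul ht))

end Crossing

section TwoCrossings

/-- The coordinates of `ℝ⁴` in two blocks, the parameters `x 0, x 2` of the first crossing and
`x 1, x 3` of the second. -/
def crossingBlocks : Fin 2 ⊕ Fin 2 ≃ Fin 4 where
  toFun := Sum.elim ![0, 2] ![1, 3]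
  invFun := ![.inl 0, .inr 0, .inl 1, .inr 1]
  left_inv := by decide
  right_inv := by decide

theorem splitCoordinates_crossingBlocks (x : E4) :
    splitCoordinates crossingBlocks x = (![x 0, x 2], ![x 1, x 3]) := by
  rw [splitCoordinates_apply]
  ext i <;> fin_cases i <;> rfl

theorem setIntegral_lt_mul_of_even {F G : (Fin 2 → ℝ) → ℝ} (hF : Integrable F)
    (hG : Integrable G) (hFeven : ∀ t, F (-t) = F t) (hGeven : ∀ t, G (-t) = G t) {i j : Fin 4}
    (hij : i ≠ j) :
    ∫ x in {x : E4 | x i < x j}, F ![x 0, x 2] * G ![x 1, x 3] = (∫ t, F t) * (∫ t, G t) / 2 := by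
  have hsplit := measurePreserving_splitCoordinates crossingBlocks
  have hemb := (splitCoordinates crossingBlocks).measurableEmbedding
  set H : E4 → ℝ := fun x => F ![x 0, x 2] * G ![x 1, x 3]
  have hH : H = (fun p => F p.1 * G p.2) ∘ splitCoordinates crossingBlocks :=
    funext fun x => by simp only [H, Function.comp_apply, splitCoordinates_crossingBlocks]
  have hHint : Integrable H := hH ▸ (hsplit.integrable_comp_emb hemb).2 (hF.mul_prod hG)
  have hHeven (x : E4) : H (-x) = H x := by
    simpa [H] using congrArg₂ (· * ·) (hFeven ![x 0, x 2]) (hGeven ![x 1, x 3])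
  let L : E4 →ₗ[ℝ] ℝ := (EuclideanSpace.proj j - EuclideanSpace.proj i : E4 →L[ℝ] ℝ)
  have hL : L ≠ 0 := fun h => by
    simpa [L, hij] using LinearMap.congr_fun h (EuclideanSpace.single j 1)
  have hset : {x : E4 | x i < x j} = {x | 0 < L x} := by simp [L]
  have hprod : ∫ x, H x = (∫ t, F t) * ∫ t, G t := by
    rw [hH]
    exact (hsplit.integral_comp hemb _).trans (integral_prod_mul F G)
  rw [hset, setIntegral_linearMap_pos_of_even hHint hHeven hL, hprod, smul_eq_mul]
  ring

variable {A c d A' c' d' : E3}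

theorem wedge22_direction (hC : IsCrossing A c d) (hC' : IsCrossing A' c' d') (g : E3 → ℝ)
    (x : E4) :
    wedge22 g (fun y => unitv (A + y 0 • c + y 2 • d))
        (fun y => unitv (A' + y 1 • c' + y 3 • d')) x =
      -(crossingDensity g A c d ![x 0, x 2] * crossingDensity g A' c' d' ![x 1, x 3]) := by
  rw [wedge22_eq_neg_mul_form2 g (fun _ h0 h2 => hC.pdv_direction_eq_zero h0 h2 x)
      (fun _ h1 h3 => hC'.pdv_direction_eq_zero h1 h3 x),
    hC.form2_direction g (by decide), hC'.form2_direction g (by decide)]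

theorem eventually_setIntegral_wedge22_direction (hC : IsCrossing A c d)
    (hC' : IsCrossing A' c' d') {δ : ℝ} (hδ : 0 < δ) {i j : Fin 4} (hij : i ≠ j) :
    ∀ᶠ ε in 𝓝[>] (0 : ℝ), ∀ g, IsEtaForm ε g →
      ∫ x in cube4 δ ∩ {x | x i < x j}, wedge22 g (fun y => unitv (A + y 0 • c + y 2 • d))
          (fun y => unitv (A' + y 1 • c' + y 3 • d')) x =
        -(Real.sign (cross2 c d) * Real.sign (cross2 c' d')) / 2 := by
  filter_upwards [eventually_le_half, hC.eventually_norm_lt_of_crossingDensity_ne_zero hδ,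
    hC'.eventually_norm_lt_of_crossingDensity_ne_zero hδ] with ε hε hsupp hsupp' g hg
  have hmeas : MeasurableSet {x : E4 | x i < x j} :=
    (isOpen_lt (by fun_prop) (by fun_prop)).measurableSet
  have hvanish : ∀ x ∈ {x : E4 | x i < x j} \ (cube4 δ ∩ {x | x i < x j}),
      crossingDensity g A c d ![x 0, x 2] * crossingDensity g A' c' d' ![x 1, x 3] = 0 := by
    rintro x ⟨hx, hxcube⟩
    by_contra hne
    have h02 := (pi_norm_lt_iff hδ).1 (hsupp g hg _ (left_ne_zero_of_mul hne))
    have h13 := (pi_norm_lt_iff hδ).1 (hsupp' g hg _ (right_ne_zero_of_mul hne))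
    refine hxcube ⟨fun k => ?_, hx⟩
    fin_cases k
    exacts [h02 0, h13 0, h02 1, h13 1]
  simp only [wedge22_direction hC hC']
  rw [integral_neg,
    ← setIntegral_eq_of_subset_of_forall_sdiff_eq_zero hmeas inter_subset_right hvanish,
    setIntegral_lt_mul_of_even (hC.integrable_crossingDensity hg hε)
      (hC'.integrable_crossingDensity hg hε) hg.crossingDensity_neg hg.crossingDensity_neg hij,
    hC.integral_crossingDensity hg hε, hC'.integral_crossingDensity hg hε]
  ring

end TwoCrossings

section Model

variable {a v : Fin 3 → E3} {s1 s2 s3 δ : ℝ}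

theorem IsModelTriple.isCrossing (hm : IsModelTriple a v) {i j : Fin 3} (h : a j 2 < a i 2) :
    IsCrossing (a i - a j) (v i) (-v j) := by
  obtain ⟨hv, -, h01, h12, hcross, -⟩ := hm
  have hbase (k : Fin 3) : pr12 (a k) = pr12 (a 1) := by
    fin_cases k
    exacts [h01, rfl, h12.symm]
  have hij : i ≠ j := fun hij => h.ne (hij ▸ rfl)
  refine ⟨?_, sub_pos.2 h, hv i, by simp [hv j], ?_⟩
  · exact sub_eq_zero.2 ((hbase i).trans (hbase j).symm)
  · rw [cross2_neg_right]
    exact neg_ne_zero.2 (hcross i j hij)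

theorem seg_sub_seg (a v b w : E3) (s t : ℝ) :
    seg a v s - seg b w t = a - b + s • v + t • -w := by
  rw [seg, seg, smul_neg]
  abel

theorem eventually_IX1model_eq (hδ : 0 < δ) (hm : ModelLeft a v s1 s2 s3) :
    ∀ᶠ ε in 𝓝[>] (0 : ℝ), ∀ g, IsEtaForm ε g → IX1model a v δ g = s1 * s2 / 2 := by
  obtain ⟨hmodel, h20, rfl, rfl, -⟩ := hm
  obtain ⟨-, -, -, -, -, h01, -⟩ := id hmodel
  filter_upwards [eventually_setIntegral_wedge22_direction (hmodel.isCrossing h01).symm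
    (hmodel.isCrossing h20) hδ zero_ne_one] with ε hε g hg
  rw [cross2_neg_left_eq_swap, cross2_neg_right, Real.sign_neg] at hε
  simp only [IX1model, seg_sub_seg, add_right_comm _ (_ • v 1)]
  rw [hε g hg]
  ring

theorem eventually_IX2model_eq (hδ : 0 < δ) (hm : ModelLeft a v s1 s2 s3) :
    ∀ᶠ ε in 𝓝[>] (0 : ℝ), ∀ g, IsEtaForm ε g → IX2model a v δ g = s2 * s3 / 2 := by
  obtain ⟨hmodel, -, -, rfl, rfl⟩ := hm
  obtain ⟨-, -, -, -, -, h01, h21⟩ := id hmodel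
  filter_upwards [eventually_setIntegral_wedge22_direction (hmodel.isCrossing h01).symm
    (hmodel.isCrossing h21) hδ (show (1 : Fin 4) ≠ 2 by decide)] with ε hε g hg
  rw [cross2_neg_left_eq_swap, cross2_neg_right, Real.sign_neg] at hε
  simp only [IX2model, seg_sub_seg, add_right_comm (a 1 - a 0) (_ • v 1)]
  rw [hε g hg]
  ring

end Model

theorem statement15_general (a v : Fin 3 → E3) (δ s1 s2 s3 : ℝ) (hδ : 0 < δ)
    (hm : ModelLeft a v s1 s2 s3) :
    ∃ ε₀ > (0 : ℝ), ∀ ε : ℝ, 0 < ε → ε < ε₀ → ∀ g : E3 → ℝ, IsEtaForm ε g →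
      IX1model a v δ g + IX2model a v δ g = s2 * (s1 + s3) / 2 := by
  obtain ⟨ε₀, hε₀, hsum⟩ := mem_nhdsGT_iff_exists_Ioo_subset.1
    ((eventually_IX1model_eq hδ hm).and (eventually_IX2model_eq hδ hm))
  refine ⟨ε₀, hε₀, fun ε hε0 hε g hg => ?_⟩
  rw [(hsum ⟨hε0, hε⟩).1 g hg, (hsum ⟨hε0, hε⟩).2 g hg]
  ring

/-- normalization of the model integrals. For every model triple
point of type `(←, +, +, +)` and all sufficiently small `ε > 0`,
`I_X^{X′₁,+,+,+} + I_X^{(X′₂,l),+,+,+} = 1`; for every model triple point of type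
`(←, +, -, -)` and all sufficiently small `ε > 0`,
`I_X^{X′₁,+,-,-} + I_X^{(X′₂,l),+,-,-} = 0`. -/
theorem statement15 :
    (∀ (a v : Fin 3 → E3) (δ : ℝ), 0 < δ → ModelLeft a v 1 1 1 →
      ∃ ε₀ > (0 : ℝ), ∀ ε : ℝ, 0 < ε → ε < ε₀ → ∀ g : E3 → ℝ, IsEtaForm ε g →
        IX1model a v δ g + IX2model a v δ g = 1) ∧
    (∀ (a v : Fin 3 → E3) (δ : ℝ), 0 < δ → ModelLeft a v 1 (-1) (-1) →
      ∃ ε₀ > (0 : ℝ), ∀ ε : ℝ, 0 < ε → ε < ε₀ → ∀ g : E3 → ℝ, IsEtaForm ε g →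
        IX1model a v δ g + IX2model a v δ g = 0) := by
  refine ⟨fun a v δ hδ hm => ?_, fun a v δ hδ hm => ?_⟩
  · simpa [one_add_one_eq_two] using statement15_general a v δ 1 1 1 hδ hm
  · simpa using statement15_general a v δ 1 (-1) (-1) hδ hm

end
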